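/- arXiv:math/0305088 — 2 statements merged into one kernel-verified Lean document; each statement's English description precedes it below -/
import Mathlib

section
/- Let P, Q ∈ ℂ[x,y] be such that the map f = (P,Q) : ℂ² → ℂ² is dominant, P and Q monic in y with constant leading coefficients. A point (u₀,v₀) ∈ ℂ² is a non-proper value of f (i.e. there is a sequence p_i → ∞ in ℂ² with f(p_i) → (u₀,v₀)) if and only if the leading coefficient R_0(u,v) (in x) of Res_y(P − u, Q − v) vanishes at (u₀,v₀). -/
open Polynomial Filter

/-- The Sylvester matrix of two polynomials `p, q` regarded as having degrees `m, n`. -/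
noncomputable def sylvesterMatrix {R : Type*} [CommRing R] (m n : ℕ) (p q : Polynomial R) :
    Matrix (Fin (n + m)) (Fin (n + m)) R :=
  Matrix.of fun i j =>
    Fin.addCases
      (fun i₁ : Fin n =>
        if (i₁ : ℕ) ≤ (j : ℕ) ∧ (j : ℕ) ≤ m + (i₁ : ℕ) then p.coeff (m + (i₁ : ℕ) - (j : ℕ)) else 0)
      (fun i₂ : Fin m =>
        if (i₂ : ℕ) ≤ (j : ℕ) ∧ (j : ℕ) ≤ n + (i₂ : ℕ) then q.coeff (n + (i₂ : ℕ) - (j : ℕ)) else 0)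
      i

/-- The resultant of `p, q` regarded as having degrees `m, n`. -/
noncomputable def resultant {R : Type*} [CommRing R] (m n : ℕ) (p q : Polynomial R) : R :=
  (sylvesterMatrix m n p q).det

/-- `P ∈ ℂ[x][y]` reinterpreted as a polynomial in `y` over `ℂ[u,v][x]`, minus the
indeterminate `w` (`w = u` or `w = v`). -/
noncomputable def shifted (P : Polynomial (Polynomial ℂ)) (w : MvPolynomial (Fin 2) ℂ) :
    Polynomial (Polynomial (MvPolynomial (Fin 2) ℂ)) :=
  P.map (Polynomial.mapRingHom MvPolynomial.C) - C (C w)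

/-! Since `P` is monic in `y`, a point `(x, y)` that goes to infinity while `P(x, y)` converges must
have `x → ∞`. Over the fiber of `t = (u, v)`, the coordinate `x` runs through the roots of
`R(t) = Res_y(P - u, Q - v)`, so `t₀` is a non-proper value iff `R(t)` has roots that escape to
infinity as `t → t₀`. If the leading coefficient `R₀` does not vanish at `t₀`, then
`R(t)(x) / x ^ N → R₀(t₀) ≠ 0` as `(x, t) → (∞, t₀)`, so no root escapes. If `R₀(t₀) = 0` and no
root escapes, say all roots are bounded by `M` near `t₀`, then approaching `t₀` through the dense
set `R₀ ≠ 0` gives `‖R(t)(x)‖ ≤ ‖R₀(t)‖ (‖x‖ + M) ^ N → 0` for every `x`. Thus `R(t₀) = 0`, which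
has arbitrarily large roots after all. -/

open Bornology Topology
open scoped Polynomial.Bivariate

section EscapingRoots

variable {K : Type*}

theorem tendsto_eval_div_pow [NormedField K] {ι : Type*} {l : Filter ι} {p : ι → K[X]} {q : K[X]}
    {x : ι → K} {N : ℕ} (hdeg : ∀ i, (p i).natDegree ≤ N)
    (hcoeff : ∀ k, Tendsto (fun i => (p i).coeff k) l (𝓝 (q.coeff k)))
    (hx : Tendsto x l (cobounded K)) :
    Tendsto (fun i => (p i).eval (x i) / x i ^ N) l (𝓝 (q.coeff N)) := by
  have hinv : Tendsto (fun i => (x i)⁻¹) l (𝓝 0) := tendsto_inv₀_cobounded.comp hx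
  have hsum : Tendsto (fun i => ∑ k ∈ Finset.range (N + 1), (p i).coeff k * (x i)⁻¹ ^ (N - k)) l
      (𝓝 (∑ k ∈ Finset.range (N + 1), q.coeff k * 0 ^ (N - k))) :=
    tendsto_finsetSum _ fun k _ => (hcoeff k).mul (hinv.pow _)
  have hlim : ∑ k ∈ Finset.range (N + 1), q.coeff k * 0 ^ (N - k) = q.coeff N := by
    rw [Finset.sum_range_succ, Finset.sum_eq_zero fun k hk => ?_]
    · simp
    · rw [zero_pow (Nat.sub_ne_zero_of_lt (Finset.mem_range.1 hk)), mul_zero]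
  rw [hlim] at hsum
  refine hsum.congr' ?_
  filter_upwards [hx.eventually_ne_cobounded 0] with i hi
  rw [eval_eq_sum_range' (Nat.lt_succ_of_le (hdeg i)), Finset.sum_div]
  refine Finset.sum_congr rfl fun k hk => ?_
  rw [inv_pow, mul_div_assoc, pow_sub₀ _ hi (Finset.mem_range_succ_iff.1 hk), mul_inv, inv_inv,
    div_eq_mul_inv, mul_comm (x i ^ k)]

theorem eventually_eval_ne_zero [NormedField K] {ι : Type*} {l : Filter ι} {p : ι → K[X]}
    {q : K[X]} {x : ι → K} {N : ℕ} (hdeg : ∀ i, (p i).natDegree ≤ N)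
    (hcoeff : ∀ k, Tendsto (fun i => (p i).coeff k) l (𝓝 (q.coeff k))) (hq : q.coeff N ≠ 0)
    (hx : Tendsto x l (cobounded K)) :
    ∀ᶠ i in l, (p i).eval (x i) ≠ 0 := by
  filter_upwards [(tendsto_eval_div_pow hdeg hcoeff hx).eventually_ne hq] with i hi h0
  exact hi (by rw [h0, zero_div])

theorem norm_eval_le_of_forall_roots_norm_le [NormedField K] {p : K[X]} (hp : p.Splits) {M : ℝ}
    (hM : ∀ z ∈ p.roots, ‖z‖ ≤ M) (x : K) :
    ‖p.eval x‖ ≤ ‖p.leadingCoeff‖ * (‖x‖ + M) ^ p.natDegree := by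
  rw [hp.eval_eq_prod_roots, norm_mul, hp.natDegree_eq_card_roots,
    ← Multiset.card_map (fun a => x - a) p.roots]
  refine mul_le_mul_of_nonneg_left ?_ (norm_nonneg _)
  refine (map_multiset_prod (normHom : K →*₀ ℝ) _).trans_le
    (Multiset.prod_map_le_pow_card (fun z _ => norm_nonneg z) ?_)
  simp only [Multiset.mem_map, forall_exists_index, and_imp, forall_apply_eq_imp_iff₂]
  exact fun z hz => (norm_sub_le x z).trans (by gcongr; exact hM z hz)

theorem tendsto_eval_zero_of_tendsto_leadingCoeff_zero [NormedField K] {ι : Type*} {l : Filter ι}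
    {p : ι → K[X]} {N : ℕ} {M : ℝ} (hp : ∀ i, (p i).Splits) (hdeg : ∀ᶠ i in l, (p i).natDegree = N)
    (hlead : Tendsto (fun i => (p i).leadingCoeff) l (𝓝 0))
    (hroots : ∀ᶠ i in l, ∀ z ∈ (p i).roots, ‖z‖ ≤ M) (x : K) :
    Tendsto (fun i => (p i).eval x) l (𝓝 0) := by
  have hbound : Tendsto (fun i => ‖(p i).leadingCoeff‖ * (‖x‖ + M) ^ N) l (𝓝 0) := by
    simpa using hlead.norm.mul_const ((‖x‖ + M) ^ N)
  refine squeeze_zero_norm' ?_ hbound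
  filter_upwards [hdeg, hroots] with i hi hM
  exact hi ▸ norm_eval_le_of_forall_roots_norm_le (hp i) hM x

variable {σ : Type*}

theorem dense_setOf_mvPolynomial_eval_ne_zero [NontriviallyNormedField K] {p : MvPolynomial σ K}
    (hp : p ≠ 0) : Dense {t : σ → K | MvPolynomial.eval t p ≠ 0} := by
  refine fun t => mem_closure_iff_nhds.2 fun U hU => ?_
  rw [nhds_pi, Filter.mem_pi] at hU
  obtain ⟨I, -, V, hV, hVU⟩ := hU
  by_contra! hempty
  refine hp (MvPolynomial.funext_set V (fun i => infinite_of_mem_nhds (t i) (hV i)) fun a ha => ?_)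
  rw [map_zero]
  by_contra ha₀
  exact hempty.subset ⟨hVU fun i _ => ha i trivial, ha₀⟩

theorem continuous_eval_map_mvPolynomial_eval [NormedField K] (R : (MvPolynomial σ K)[X]) (x : K) :
    Continuous fun t : σ → K => (R.map (MvPolynomial.eval t)).eval x := by
  simp only [eval_map, eval₂_eq_sum_range]
  exact continuous_finsetSum _ fun i _ =>
    (MvPolynomial.continuous_eval (R.coeff i)).mul continuous_const

theorem frequently_eval_map_eq_zero [NontriviallyNormedField K] [IsAlgClosed K]
    {R : (MvPolynomial σ K)[X]} (hR : R ≠ 0) {t₀ : σ → K}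
    (h₀ : MvPolynomial.eval t₀ R.leadingCoeff = 0) :
    ∃ᶠ w in cobounded K ×ˢ 𝓝 t₀, (R.map (MvPolynomial.eval w.2)).eval w.1 = 0 := by
  intro hev
  obtain ⟨S, hS, T, hT, hST⟩ := mem_prod_iff.1 hev
  obtain ⟨M, hM⟩ := (isBounded_compl_iff.2 hS).exists_norm_le
  have hroots : ∀ t ∈ T, ∀ z ∈ (R.map (MvPolynomial.eval t)).roots, ‖z‖ ≤ M := fun t ht z hz =>
    hM z fun hzS => hST (Set.mk_mem_prod hzS ht) (isRoot_of_mem_roots hz)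
  set D := {t : σ → K | MvPolynomial.eval t R.leadingCoeff ≠ 0}
  have : (𝓝[D] t₀).NeBot := mem_closure_iff_nhdsWithin_neBot.1
    (dense_setOf_mvPolynomial_eval_ne_zero (leadingCoeff_ne_zero.2 hR) t₀)
  have hlead : Tendsto (fun t => (R.map (MvPolynomial.eval t)).leadingCoeff) (𝓝[D] t₀) (𝓝 0) := by
    rw [← h₀]
    refine (((MvPolynomial.continuous_eval R.leadingCoeff).tendsto t₀).mono_left
      nhdsWithin_le_nhds).congr' ?_
    filter_upwards [self_mem_nhdsWithin] with t ht
    exact (leadingCoeff_map_of_leadingCoeff_ne_zero _ ht).symm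
  have hdeg : ∀ᶠ t in 𝓝[D] t₀, (R.map (MvPolynomial.eval t)).natDegree = R.natDegree := by
    filter_upwards [self_mem_nhdsWithin] with t ht
    exact natDegree_map_of_leadingCoeff_ne_zero _ ht
  have hlim (x : K) : Tendsto (fun t => (R.map (MvPolynomial.eval t)).eval x) (𝓝[D] t₀) (𝓝 0) :=
    tendsto_eval_zero_of_tendsto_leadingCoeff_zero (fun _ => IsAlgClosed.splits _) hdeg hlead
      ((eventually_of_mem hT hroots).filter_mono nhdsWithin_le_nhds) x
  have hvanish (x : K) : (R.map (MvPolynomial.eval t₀)).eval x = 0 :=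
    tendsto_nhds_unique
      (((continuous_eval_map_mvPolynomial_eval R x).tendsto t₀).mono_left nhdsWithin_le_nhds)
      (hlim x)
  obtain ⟨x, hx⟩ := nonempty_of_mem hS
  exact hST (Set.mk_mem_prod hx (mem_of_mem_nhds hT)) (hvanish x)

theorem frequently_eval_map_eq_zero_iff [NontriviallyNormedField K] [IsAlgClosed K]
    {R : (MvPolynomial σ K)[X]} (hR : R ≠ 0) {t₀ : σ → K} :
    (∃ᶠ w in cobounded K ×ˢ 𝓝 t₀, (R.map (MvPolynomial.eval w.2)).eval w.1 = 0) ↔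
      MvPolynomial.eval t₀ R.leadingCoeff = 0 := by
  refine ⟨fun hfreq => ?_, frequently_eval_map_eq_zero hR⟩
  by_contra h₀
  refine hfreq (eventually_eval_ne_zero (q := R.map (MvPolynomial.eval t₀))
    (fun _ => natDegree_map_le) (fun k => ?_) (by simpa using h₀) tendsto_fst)
  simp only [coeff_map]
  exact ((MvPolynomial.continuous_eval (R.coeff k)).tendsto t₀).comp tendsto_snd

end EscapingRoots

section NonproperValues

variable {K : Type*}

theorem mapClusterPt_cobounded_iff_exists_seq {E T : Type*} [SeminormedAddCommGroup E]
    [TopologicalSpace T] [FirstCountableTopology T] {f : E → T} {t : T} :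
    MapClusterPt t (cobounded E) f ↔ ∃ s : ℕ → E,
      Tendsto (fun i => ‖s i‖) atTop atTop ∧ Tendsto (fun i => f (s i)) atTop (𝓝 t) := by
  simp only [tendsto_norm_atTop_iff_cobounded]
  refine ⟨fun h => ?_, fun ⟨s, hs, hf⟩ => hf.mapClusterPt.of_comp hs⟩
  rw [← comap_norm_atTop] at h ⊢
  obtain ⟨s, hf, hs⟩ := h.exists_seq_tendsto
  exact ⟨s, hs, hf⟩

/-- The polynomial map `(x, y) ↦ (P(x, y), Q(x, y))` of the plane. Its values are functions on
`Fin 2`, the points at which polynomials in the two variables `u, v` are evaluated. -/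
noncomputable def planarMap [CommRing K] (P Q : K[X][Y]) (z : K × K) : Fin 2 → K :=
  ![P.evalEval z.1 z.2, Q.evalEval z.1 z.2]

theorem exists_le_nhds_of_not_le_cobounded {X : Type*} [PseudoMetricSpace X] [ProperSpace X]
    {U : Ultrafilter X} (hU : ¬ (U : Filter X) ≤ cobounded X) : ∃ x, (U : Filter X) ≤ 𝓝 x := by
  obtain ⟨s, hs, hsU⟩ := Filter.not_le.1 hU
  have hcompact : IsCompact (closure sᶜ) := (isBounded_compl_iff.2 hs).isCompact_closure
  obtain ⟨x, -, hx⟩ := hcompact.ultrafilter_le_nhds' U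
    (mem_of_superset (Ultrafilter.compl_mem_iff_notMem.2 hsU) subset_closure)
  exact ⟨x, hx⟩

theorem tendsto_fst_cobounded [NormedField K] [ProperSpace K] {P : K[X][Y]}
    (hP : IsUnit P.leadingCoeff) (hdeg : 0 < P.natDegree) {l : Filter (K × K)}
    (hl : l ≤ cobounded (K × K)) {u : K}
    (hu : Tendsto (fun z => P.evalEval z.1 z.2) l (𝓝 u)) :
    Tendsto Prod.fst l (cobounded K) := by
  refine tendsto_iff_ultrafilter _ _ _ |>.2 fun U hU => ?_
  by_contra hfst
  obtain ⟨x₀, hx₀⟩ := exists_le_nhds_of_not_le_cobounded (U := U.map Prod.fst) hfst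
  have hsnd : Tendsto Prod.snd (U : Filter (K × K)) (cobounded K) :=
    tendsto_iff_comap.2 <| (Ultrafilter.le_sup_iff.1 (hU.trans hl)).resolve_left
      fun h => hfst (tendsto_iff_comap.2 h)
  have hcoeff (k : ℕ) : Tendsto
      (fun z : K × K => (P.map (evalRingHom z.1) - C (P.evalEval z.1 z.2)).coeff k) U
      (𝓝 ((P.map (evalRingHom x₀) - C u).coeff k)) := by
    simp only [coeff_sub, coeff_map, coe_evalRingHom, coeff_C]
    refine (((P.coeff k).continuous.tendsto x₀).comp hx₀).sub ?_
    split_ifs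
    · exact hu.mono_left hU
    · exact tendsto_const_nhds
  have hlead : (P.map (evalRingHom x₀) - C u).coeff P.natDegree ≠ 0 := by
    simpa [coeff_C, hdeg.ne'] using (hP.map (evalRingHom x₀)).ne_zero
  obtain ⟨z, hz⟩ := (eventually_eval_ne_zero
    (fun z => by simpa only [natDegree_sub_C] using natDegree_map_le) hcoeff hlead hsnd).exists
  exact hz (by simp [map_evalRingHom_eval])

theorem mapClusterPt_planarMap_iff_frequently [NormedField K] [ProperSpace K] {P : K[X][Y]}
    (hP : IsUnit P.leadingCoeff) (hdeg : 0 < P.natDegree) {Q : K[X][Y]} {t₀ : Fin 2 → K} :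
    MapClusterPt t₀ (cobounded (K × K)) (planarMap P Q) ↔
      ∃ᶠ w in cobounded K ×ˢ 𝓝 t₀, ∃ y, planarMap P Q (w.1, y) = w.2 := by
  constructor
  · intro h
    obtain ⟨U, hU, hlim⟩ := mapClusterPt_iff_ultrafilter.1 h
    have hfst : Tendsto Prod.fst (U : Filter (K × K)) (cobounded K) :=
      tendsto_fst_cobounded hP hdeg hU (tendsto_pi_nhds.1 hlim 0)
    exact (hfst.prodMk hlim).frequently (Eventually.of_forall fun z => ⟨z.2, rfl⟩).frequently
  · intro hfreq
    refine mapClusterPt_iff_frequently.2 fun T hT hev => hfreq ?_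
    have hfst : ∀ᶠ x in cobounded K, ∀ y, planarMap P Q (x, y) ∉ T := by
      refine (eventually_comap.1 (hev.filter_mono le_sup_left)).mono fun x hx y => hx (x, y) rfl
    filter_upwards [hfst.prod_mk hT] with w ⟨hw, hwT⟩ ⟨y, hy⟩
    exact hw y (hy ▸ hwT)

end NonproperValues

section Resultant

theorem resultant_eq_polynomial_resultant {R : Type*} [CommRing R] (m n : ℕ) (p q : R[X]) :
    _root_.resultant m n p q = Polynomial.resultant p q m n := by
  have hrev : sylvesterMatrix m n p q = ((Polynomial.sylvester p q m n).transpose.submatrix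
      (finCongr (add_comm n m)) (finCongr (add_comm n m))).submatrix
        Fin.revPerm Fin.revPerm := by
    ext i j
    simp only [Matrix.transpose_apply, Matrix.submatrix_apply, sylvesterMatrix,
      Polynomial.sylvester, Matrix.of_apply, Fin.addCases, Set.mem_Icc, eq_rec_constant,
      finCongr_apply, Fin.revPerm_apply, Fin.val_cast, Fin.val_rev, Fin.val_castLT, Fin.val_subNat]
    grind
  rw [_root_.resultant, hrev, Matrix.det_submatrix_equiv_self, Matrix.det_submatrix_equiv_self,
    Matrix.det_transpose, Polynomial.resultant]

theorem resultant_eq_zero_iff_exists_common_root {K : Type*} [Field K] [IsAlgClosed K] {p q : K[X]}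
    (hp : p ≠ 0) {n : ℕ} (hq : q.natDegree ≤ n) :
    _root_.resultant p.natDegree n p q = 0 ↔ ∃ y, p.eval y = 0 ∧ q.eval y = 0 := by
  obtain ⟨k, rfl⟩ := Nat.exists_eq_add_of_le hq
  rw [resultant_eq_polynomial_resultant, resultant_add_right_deg _ _ _ _ _ le_rfl,
    coeff_natDegree, mul_eq_zero_iff_left (pow_ne_zero k (leadingCoeff_ne_zero.2 hp)),
    resultant_eq_zero_iff, isCoprime_iff_aeval_ne_zero_of_isAlgClosed K K]
  simp [hp, not_or]

theorem exists_forall_eval_ne_or_eval_ne {K : Type*} [Field K] [Infinite K] (p q : K[X]) :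
    ∃ u v, ∀ y, p.eval y ≠ u ∨ q.eval y ≠ v := by
  obtain ⟨u, hu⟩ : ∃ u, p - C u ≠ 0 := ⟨p.coeff 0 + 1, fun h => by simpa using congr(coeff $h 0)⟩
  have hfin : (q.eval '' (p - C u).rootSet K).Finite := ((p - C u).rootSet_finite K).image _
  obtain ⟨v, hv⟩ := hfin.exists_notMem
  refine ⟨u, v, fun y => or_iff_not_imp_left.2 fun hy hyv => hv ⟨y, ?_, hyv⟩⟩
  simpa [mem_rootSet, hu, sub_eq_zero] using hy

/-- The polynomial `Res_y(P - u, Q - v)` in `x` over `ℂ[u, v]`, with `P` and `Q` regarded as having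
degrees `m` and `n` in `y`. -/
noncomputable def fiberResultant (m n : ℕ) (P Q : ℂ[X][Y]) : (MvPolynomial (Fin 2) ℂ)[X] :=
  _root_.resultant m n (shifted P (MvPolynomial.X 0)) (shifted Q (MvPolynomial.X 1))

theorem map_shifted (P : ℂ[X][Y]) (w : MvPolynomial (Fin 2) ℂ) (x : ℂ) (t : Fin 2 → ℂ) :
    (shifted P w).map ((evalRingHom x).comp (mapRingHom (MvPolynomial.eval t))) =
      P.map (evalRingHom x) - C (MvPolynomial.eval t w) := by
  have hcomp : ((evalRingHom x).comp (mapRingHom (MvPolynomial.eval t))).comp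
      (mapRingHom MvPolynomial.C) = evalRingHom x := by
    ext <;> simp
  simp [shifted, Polynomial.map_map, hcomp]

theorem eval_map_fiberResultant (m n : ℕ) (P Q : ℂ[X][Y]) (x : ℂ) (t : Fin 2 → ℂ) :
    ((fiberResultant m n P Q).map (MvPolynomial.eval t)).eval x =
      _root_.resultant m n (P.map (evalRingHom x) - C (t 0)) (Q.map (evalRingHom x) - C (t 1)) := by
  change ((evalRingHom x).comp (mapRingHom (MvPolynomial.eval t))) _ = _
  rw [fiberResultant, resultant_eq_polynomial_resultant, resultant_eq_polynomial_resultant,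
    ← resultant_map_map, map_shifted, map_shifted, MvPolynomial.eval_X, MvPolynomial.eval_X]

variable {P Q : ℂ[X][Y]} {n : ℕ}

theorem eval_map_fiberResultant_eq_zero_iff (hP : IsUnit P.leadingCoeff) (hdeg : 0 < P.natDegree)
    (hn : Q.natDegree ≤ n) (x : ℂ) (t : Fin 2 → ℂ) :
    ((fiberResultant P.natDegree n P Q).map (MvPolynomial.eval t)).eval x = 0 ↔
      ∃ y, planarMap P Q (x, y) = t := by
  have hPdeg : (P.map (evalRingHom x) - C (t 0)).natDegree = P.natDegree := by
    rw [natDegree_sub_C,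
      natDegree_map_of_leadingCoeff_ne_zero _ (hP.map (evalRingHom x)).ne_zero]
  have hP₀ : P.map (evalRingHom x) - C (t 0) ≠ 0 := ne_zero_of_natDegree_gt (hPdeg ▸ hdeg)
  have hQdeg : (Q.map (evalRingHom x) - C (t 1)).natDegree ≤ n := by
    rw [natDegree_sub_C]
    exact natDegree_map_le.trans hn
  rw [eval_map_fiberResultant, ← hPdeg, resultant_eq_zero_iff_exists_common_root hP₀ hQdeg]
  simp [planarMap, funext_iff, Fin.forall_fin_two, sub_eq_zero, map_evalRingHom_eval]

theorem fiberResultant_ne_zero (hP : IsUnit P.leadingCoeff) (hdeg : 0 < P.natDegree)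
    (hn : Q.natDegree ≤ n) : fiberResultant P.natDegree n P Q ≠ 0 := by
  intro h
  obtain ⟨u, v, huv⟩ := exists_forall_eval_ne_or_eval_ne (P.map (evalRingHom 0))
    (Q.map (evalRingHom 0))
  obtain ⟨y, hy⟩ := (eval_map_fiberResultant_eq_zero_iff hP hdeg hn 0 ![u, v]).1 (by simp [h])
  have hu : P.evalEval 0 y = u := congr($hy 0)
  have hv : Q.evalEval 0 y = v := congr($hy 1)
  simpa [map_evalRingHom_eval, hu, hv] using huv y

theorem mapClusterPt_planarMap_iff_eval_leadingCoeff_fiberResultant_eq_zero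
    (hP : IsUnit P.leadingCoeff) (hdeg : 0 < P.natDegree) (hn : Q.natDegree ≤ n)
    {t₀ : Fin 2 → ℂ} :
    MapClusterPt t₀ (cobounded (ℂ × ℂ)) (planarMap P Q) ↔
      MvPolynomial.eval t₀ (fiberResultant P.natDegree n P Q).leadingCoeff = 0 := by
  simp only [mapClusterPt_planarMap_iff_frequently hP hdeg,
    ← eval_map_fiberResultant_eq_zero_iff hP hdeg hn,
    frequently_eval_map_eq_zero_iff (fiberResultant_ne_zero hP hdeg hn)]

end Resultant

theorem stmt_8_general {P Q : ℂ[X][Y]} {n : ℕ} (hP : IsUnit P.leadingCoeff)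
    (hdeg : 0 < P.natDegree) (hn : Q.natDegree ≤ n) (u₀ v₀ : ℂ) :
    (∃ s : ℕ → ℂ × ℂ, Tendsto (fun i => ‖s i‖) atTop atTop ∧
        Tendsto (fun i => (P.evalEval (s i).1 (s i).2, Q.evalEval (s i).1 (s i).2)) atTop
          (𝓝 (u₀, v₀))) ↔
      MvPolynomial.eval ![u₀, v₀] (resultant P.natDegree n (shifted P (MvPolynomial.X 0))
        (shifted Q (MvPolynomial.X 1))).leadingCoeff = 0 := by
  change _ ↔ MvPolynomial.eval ![u₀, v₀] (fiberResultant P.natDegree n P Q).leadingCoeff = 0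
  rw [← mapClusterPt_planarMap_iff_eval_leadingCoeff_fiberResultant_eq_zero hP hdeg hn,
    mapClusterPt_cobounded_iff_exists_seq]
  simp [planarMap, tendsto_pi_nhds, Fin.forall_fin_two, Prod.tendsto_iff]

/-- For a dominant `f = (P,Q)` with `P, Q` monic in `y` (constant leading
coefficients), a point `(u₀,v₀)` is a non-proper value of `f` (some sequence `pᵢ → ∞` has
`f(pᵢ) → (u₀,v₀)`) iff the leading `x`-coefficient `R₀(u,v) ∈ ℂ[u,v]` of
`Res_y(P − u, Q − v)` vanishes at `(u₀, v₀)`. -/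
theorem stmt_8 (P Q : Polynomial (Polynomial ℂ)) (A B : ℂ) (hA : A ≠ 0) (hB : B ≠ 0)
    (m n : ℕ) (hm : 0 < m) (hn : 0 < n)
    (hPdeg : P.natDegree = m) (hPl : P.leadingCoeff = C A)
    (hQdeg : Q.natDegree = n) (hQl : Q.leadingCoeff = C B)
    (hdom : Dense (Set.range fun z : ℂ × ℂ =>
      ((P.eval (C z.2)).eval z.1, (Q.eval (C z.2)).eval z.1)))
    (hR0 : (resultant m n (shifted P (MvPolynomial.X 0)) (shifted Q (MvPolynomial.X 1))).leadingCoeff ≠ 0) :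
    ∀ u₀ v₀ : ℂ,
      (∃ s : ℕ → ℂ × ℂ, Tendsto (fun i => ‖s i‖) atTop atTop ∧
          Tendsto (fun i => (((P.eval (C (s i).2)).eval (s i).1),
            ((Q.eval (C (s i).2)).eval (s i).1))) atTop (nhds (u₀, v₀)))
        ↔ MvPolynomial.eval ![u₀, v₀]
            (resultant m n (shifted P (MvPolynomial.X 0)) (shifted Q (MvPolynomial.X 1))).leadingCoeff = 0 := by
  subst hPdeg
  exact stmt_8_general (hPl ▸ isUnit_C.2 hA.isUnit) hm hQdeg.le
end

section
/- For a dominant polynomial map f : ℂ² → ℂ², the non-proper value set A_f is closed in ℂ². -/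
open MvPolynomial Filter

/-!
Limits of `f` along sequences tending to a countably generated filter are exactly the cluster points
of `f` along that filter, and the cluster points of a filter form a closed set. The non-proper value
set is the case of the filter of neighbourhoods of infinity in `ℂ²`.
-/

theorem mapClusterPt_iff_exists_seq_tendsto {α X : Type*} [TopologicalSpace X]
    [FirstCountableTopology X] {l : Filter α} [l.IsCountablyGenerated] {f : α → X} {a : X} :
    MapClusterPt a l f ↔
      ∃ s : ℕ → α, Tendsto s atTop l ∧ Tendsto (fun i => f (s i)) atTop (nhds a) :=
  ⟨fun h => h.exists_seq_tendsto.imp fun _ => And.symm,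
    fun ⟨_, hs, hfs⟩ => hfs.mapClusterPt.of_comp hs⟩

theorem stmt_9_general {α X : Type*} [TopologicalSpace X] [FirstCountableTopology X]
    (l : Filter α) [l.IsCountablyGenerated] (f : α → X) :
    IsClosed {a : X | ∃ s : ℕ → α,
      Tendsto s atTop l ∧ Tendsto (fun i => f (s i)) atTop (nhds a)} := by
  simp only [← mapClusterPt_iff_exists_seq_tendsto]
  exact isClosed_setOfPred_clusterPt

/-- For a dominant polynomial map `f = (P,Q) : ℂ² → ℂ²`, the non-proper
value set `A_f = {a : ∃ pᵢ → ∞ with f(pᵢ) → a}` is closed in `ℂ²`. -/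
theorem stmt_9 (P Q : MvPolynomial (Fin 2) ℂ)
    (hdom : Dense (Set.range fun z : ℂ × ℂ => (eval ![z.1, z.2] P, eval ![z.1, z.2] Q))) :
    IsClosed {a : ℂ × ℂ | ∃ s : ℕ → ℂ × ℂ,
      Tendsto (fun i => ‖s i‖) atTop atTop ∧
      Tendsto (fun i => (eval ![(s i).1, (s i).2] P, eval ![(s i).1, (s i).2] Q))
        atTop (nhds a)} := by
  simpa only [tendsto_comap_iff, Function.comp_def] using
    stmt_9_general (comap norm atTop) fun z : ℂ × ℂ => (eval ![z.1, z.2] P, eval ![z.1, z.2] Q)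
end
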